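/- For every d > 0 there exists a constant K(d) > 1 with the following property. Let f : 𝔻 → 𝔻 be a nonconstant holomorphic map with f(0) = 0, let r ∈ (e^{−1}, 1) and let q ≥ 2 be an integer such that the hyperbolic distance in 𝔻 between r and r·e^{2πi/q} is at most d, and assume 0 ∉ f(r·𝕌_q), where 𝕌_q denotes the set of q-th roots of unity. Then every holomorphic covering map φ : 𝔻 → 𝔻 \ f(r·𝕌_q) with φ(0) = 0 satisfies ln|φ′(0)| ≤ ln(r)/K(d) < 0. -/

import Mathlib

open Complex Metric Set

noncomputable section

/-- A holomorphic covering map from the unit disc onto `U`. -/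
def IsHoloCover (φ : ℂ → ℂ) (U : Set ℂ) : Prop :=
  DifferentiableOn ℂ φ (Metric.ball 0 1) ∧
  ∃ h : Set.MapsTo φ (Metric.ball 0 1) U,
    ∀ x : U, DiscreteTopology (Set.MapsTo.restrict φ (Metric.ball 0 1) U h ⁻¹' {x}) ∧
      ∃ t : Bundle.Trivialization (Set.MapsTo.restrict φ (Metric.ball 0 1) U h ⁻¹' {x})
        (Set.MapsTo.restrict φ (Metric.ball 0 1) U h), x ∈ t.baseSet

/-- Inverse hyperbolic tangent. -/
def artanh (x : ℝ) : ℝ := (1 / 2) * Real.log ((1 + x) / (1 - x))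

/-- Hyperbolic distance on the unit disc. -/
def hypDist (z w : ℂ) : ℝ :=
  2 * artanh (‖z - w‖ / ‖1 - (starRingEnd ℂ) z * w‖)

/-- The set `r·𝕌_q ⊆ ℂ` of rescaled `q`-th roots of unity. -/
def rootsSet (r : ℝ) (q : ℕ) : Set ℂ := {w : ℂ | ∃ ζ : ℂ, ζ ^ q = 1 ∧ w = r * ζ}

open Filter Topology

def mob (a z : ℂ) : ℂ := (z - a) / (1 - (starRingEnd ℂ) a * z)

lemma mob_den_ne {a z : ℂ} (ha : ‖a‖ < 1) (hz : ‖z‖ < 1) : 1 - (starRingEnd ℂ) a * z ≠ 0 := by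
  intro h
  have h1 : (starRingEnd ℂ) a * z = 1 := (sub_eq_zero.mp h).symm
  have h2 : ‖a‖ * ‖z‖ = 1 := by
    have := congrArg norm h1
    simpa using this
  nlinarith [norm_nonneg a, norm_nonneg z]

lemma mob_key (a z : ℂ) :
    ‖1 - (starRingEnd ℂ) a * z‖ ^ 2 - ‖z - a‖ ^ 2 = (1 - ‖a‖ ^ 2) * (1 - ‖z‖ ^ 2) := by
  simp only [← Complex.normSq_eq_norm_sq, Complex.normSq_apply]
  simp
  ring

lemma mob_one_sub {a z : ℂ} (ha : ‖a‖ < 1) (hz : ‖z‖ < 1) :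
    1 - ‖mob a z‖ ^ 2 = (1 - ‖a‖ ^ 2) * (1 - ‖z‖ ^ 2) / ‖1 - (starRingEnd ℂ) a * z‖ ^ 2 := by
  have h : ‖1 - (starRingEnd ℂ) a * z‖ ≠ 0 := by simpa using mob_den_ne ha hz
  rw [← mob_key, mob, norm_div, div_pow, sub_div, div_self (pow_ne_zero 2 h)]

lemma sq_pos' {a : ℂ} (ha : ‖a‖ < 1) : 0 < 1 - ‖a‖ ^ 2 := by
  nlinarith [norm_nonneg a]

lemma mob_lt {a z : ℂ} (ha : ‖a‖ < 1) (hz : ‖z‖ < 1) : ‖mob a z‖ < 1 := by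
  have h : 0 < ‖1 - (starRingEnd ℂ) a * z‖ := by simpa using mob_den_ne ha hz
  have h1 := mob_one_sub ha hz
  have : 0 < 1 - ‖mob a z‖ ^ 2 := by
    rw [h1]
    have := sq_pos' ha
    have := sq_pos' hz
    positivity
  nlinarith [norm_nonneg (mob a z)]

lemma mob_self (a : ℂ) : mob a a = 0 := by simp [mob]

lemma mob_zero (a : ℂ) : mob (-a) 0 = a := by simp [mob]

lemma mob_hasDerivAt {a z : ℂ} (ha : ‖a‖ < 1) (hz : ‖z‖ < 1) :
    HasDerivAt (mob a) ((1 - ‖a‖ ^ 2 : ℝ) / (1 - (starRingEnd ℂ) a * z) ^ 2) z := by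
  have h := mob_den_ne ha hz
  have h1 : HasDerivAt (fun z : ℂ => z - a) 1 z := (hasDerivAt_id z).sub_const a
  have h2 : HasDerivAt (fun z : ℂ => 1 - (starRingEnd ℂ) a * z) (-((starRingEnd ℂ) a * 1)) z :=
    ((hasDerivAt_id z).const_mul _).const_sub 1
  have h3 := h1.div h2 h
  have e : (((1 - ‖a‖ ^ 2 : ℝ)) : ℂ) = 1 - (starRingEnd ℂ) a * a := by
    push_cast
    rw [← Complex.conj_mul']
  have e2 : ((1 - ‖a‖ ^ 2 : ℝ) : ℂ) / (1 - (starRingEnd ℂ) a * z) ^ 2 =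
    (1 * (1 - (starRingEnd ℂ) a * z) - (z - a) * -((starRingEnd ℂ) a * 1)) /
      (1 - (starRingEnd ℂ) a * z) ^ 2 := by
    rw [e]
    congr 1
    ring
  rw [e2]
  exact h3

lemma mob_deriv_norm {a z : ℂ} (ha : ‖a‖ < 1) (hz : ‖z‖ < 1) :
    ‖deriv (mob a) z‖ = (1 - ‖mob a z‖ ^ 2) / (1 - ‖z‖ ^ 2) := by
  rw [(mob_hasDerivAt ha hz).deriv, mob_one_sub ha hz, norm_div, norm_pow, Complex.norm_real,
    Real.norm_of_nonneg (sq_pos' ha).le]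
  have := (sq_pos' hz).ne'
  field_simp

lemma mob_diffAt {a z : ℂ} (ha : ‖a‖ < 1) (hz : ‖z‖ < 1) : DifferentiableAt ℂ (mob a) z :=
  (mob_hasDerivAt ha hz).differentiableAt

lemma mob_inv {a z : ℂ} (ha : ‖a‖ < 1) (hz : ‖z‖ < 1) : mob (-a) (mob a z) = z := by
  have h := mob_den_ne ha hz
  have h2 : (1 - (starRingEnd ℂ) (-a) * mob a z) ≠ 0 :=
    mob_den_ne (by simpa using ha) (mob_lt ha hz)
  rw [mob, div_eq_iff h2, mob]
  simp only [map_neg]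
  have h4 := div_mul_cancel₀ (z - a) h
  generalize (z - a) / (1 - (starRingEnd ℂ) a * z) = m at *
  linear_combination h4

/-- Schwarz-Pick, two points. -/
lemma schwarz_pick_dist {f : ℂ → ℂ} (hf : DifferentiableOn ℂ f (ball 0 1))
    (hm : MapsTo f (ball 0 1) (ball 0 1)) {a z : ℂ} (ha : ‖a‖ < 1) (hz : ‖z‖ < 1) :
    ‖mob (f a) (f z)‖ ≤ ‖mob a z‖ := by
  have hfa : ‖f a‖ < 1 := by simpa using hm (show a ∈ ball (0:ℂ) 1 by simpa using ha)
  have hna : ‖-a‖ < 1 := by simpa using ha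
  have hmem : ∀ w : ℂ, ‖w‖ < 1 → ‖f (mob (-a) w)‖ < 1 := fun w hw => by
    simpa using hm (show mob (-a) w ∈ ball (0:ℂ) 1 by simpa using mob_lt hna hw)
  have key := Complex.norm_le_norm_of_mapsTo_ball (R := 1)
    (f := fun w => mob (f a) (f (mob (-a) w))) (z := mob a z) ?_ ?_ ?_ (mob_lt ha hz)
  · simpa [mob_inv ha hz] using key
  · intro w hw
    have hw : ‖w‖ < 1 := by simpa using hw
    have h1 : DifferentiableAt ℂ f (mob (-a) w) := hf.differentiableAt
      (isOpen_ball.mem_nhds (by simpa using mob_lt hna hw))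
    have h2 : DifferentiableAt ℂ (fun w => f (mob (-a) w)) w :=
      DifferentiableAt.comp (g := f) (f := mob (-a)) w h1 (mob_diffAt hna hw)
    exact (DifferentiableAt.comp (g := mob (f a)) (f := fun w => f (mob (-a) w)) w
      (mob_diffAt hfa (hmem w hw)) h2).differentiableWithinAt
  · intro w hw
    have hw : ‖w‖ < 1 := by simpa using hw
    simpa using (mob_lt hfa (hmem w hw)).le
  · simp [mob_zero, mob_self]

/-- Schwarz-Pick, derivative. -/
lemma schwarz_pick_deriv {f : ℂ → ℂ} (hf : DifferentiableOn ℂ f (ball 0 1))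
    (hm : MapsTo f (ball 0 1) (ball 0 1)) {a : ℂ} (ha : ‖a‖ < 1) :
    ‖deriv f a‖ * (1 - ‖a‖ ^ 2) ≤ 1 - ‖f a‖ ^ 2 := by
  have hfa : ‖f a‖ < 1 := by simpa using hm (show a ∈ ball (0:ℂ) 1 by simpa using ha)
  have hna : ‖-a‖ < 1 := by simpa using ha
  have h0 : ‖(0:ℂ)‖ < 1 := by simp
  have hmem : ∀ w : ℂ, ‖w‖ < 1 → ‖f (mob (-a) w)‖ < 1 := fun w hw => by
    simpa using hm (show mob (-a) w ∈ ball (0:ℂ) 1 by simpa using mob_lt hna hw)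
  have h1 : ∀ w : ℂ, ‖w‖ < 1 → HasDerivAt (fun w => f (mob (-a) w))
      (deriv f (mob (-a) w) * deriv (mob (-a)) w) w := fun w hw =>
    HasDerivAt.comp w (hf.differentiableAt
      (isOpen_ball.mem_nhds (by simpa using mob_lt hna hw))).hasDerivAt
      (mob_diffAt hna hw).hasDerivAt
  have key := Complex.norm_deriv_le_one_of_mapsTo_ball (R := 1) (c := 0)
    (f := fun w => mob (f a) (f (mob (-a) w))) ?_ ?_ one_pos
  · have h2 : HasDerivAt (fun w => mob (f a) (f (mob (-a) w))) _ 0 :=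
      HasDerivAt.comp (h₂ := mob (f a)) (0:ℂ) (mob_diffAt hfa (hmem 0 h0)).hasDerivAt (h1 0 h0)
    rw [h2.deriv, norm_mul, norm_mul, mob_deriv_norm hfa (hmem 0 h0), mob_deriv_norm hna h0,
      mob_zero, mob_self] at key
    have p := sq_pos' hfa
    simp at key
    have : (1 - ‖f a‖ ^ 2)⁻¹ * (‖deriv f a‖ * (1 - ‖a‖ ^ 2)) * (1 - ‖f a‖ ^ 2) ≤ 1 * (1 - ‖f a‖ ^ 2) :=
      mul_le_mul_of_nonneg_right key p.le
    field_simp at this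
    linarith
  · intro w hw
    have hw : ‖w‖ < 1 := by simpa using hw
    exact (DifferentiableAt.comp (g := mob (f a)) (f := fun w => f (mob (-a) w)) w
      (mob_diffAt hfa (hmem w hw)) (h1 w hw).differentiableAt).differentiableWithinAt
  · intro w hw
    have hw : ‖w‖ < 1 := by simpa using hw
    simpa [mob_zero, mob_self] using (mob_lt hfa (hmem w hw)).le

def dl (s : ℝ) : ℝ := 2 * Real.negMulLog s / (1 - s ^ 2)

lemma omit_zero {k : ℂ → ℂ} (hk : DifferentiableOn ℂ k (ball 0 1))
    (hm : MapsTo k (ball 0 1) (ball 0 1)) (h0 : ∀ z ∈ ball (0:ℂ) 1, k z ≠ 0) :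
    ‖deriv k 0‖ ≤ 2 * Real.negMulLog ‖k 0‖ := by
  have z0 : (0:ℂ) ∈ ball (0:ℂ) 1 := by simp
  have hd : DifferentiableOn ℂ (fun z => deriv k z / k z) (ball 0 1) :=
    (hk.deriv isOpen_ball).div hk h0
  obtain ⟨L, hL0, hL⟩ := hd.isExactOn_ball.with_val_at 0 (Complex.log (k 0))
  have hkd : ∀ z ∈ ball (0:ℂ) 1, HasDerivAt k (deriv k z) z := fun z hz =>
    (hk.differentiableAt (isOpen_ball.mem_nhds hz)).hasDerivAt
  have hP : ∀ z ∈ ball (0:ℂ) 1, HasDerivAt (fun z => k z * Complex.exp (-L z)) 0 z := by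
    intro z hz
    have h1 := (hkd z hz).mul ((hL z hz).neg.cexp)
    have e : (0:ℂ) = deriv k z * Complex.exp (-L z) + k z * (Complex.exp (-L z) *
      -(deriv k z / k z)) := by
      have := h0 z hz
      field_simp
      ring
    rw [e]
    exact h1
  have hexp : ∀ z ∈ ball (0:ℂ) 1, k z = Complex.exp (L z) := by
    intro z hz
    have h1 : k z * Complex.exp (-L z) = k 0 * Complex.exp (-L 0) :=
      isOpen_ball.is_const_of_deriv_eq_zero (f := fun z => k z * Complex.exp (-L z))
        (convex_ball (0:ℂ) 1).isPreconnected
        (fun z hz => (hP z hz).differentiableAt.differentiableWithinAt)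
        (fun z hz => (hP z hz).deriv) hz z0
    rw [hL0, Complex.exp_neg, Complex.exp_neg, Complex.exp_log (h0 0 z0),
      mul_inv_cancel₀ (h0 0 z0)] at h1
    have h2 := Complex.exp_ne_zero (L z)
    field_simp at h1
    exact h1
  have hnorm : ∀ z ∈ ball (0:ℂ) 1, ‖k z‖ = Real.exp (L z).re := by
    intro z hz
    rw [hexp z hz, Complex.norm_exp]
  have hre : ∀ z ∈ ball (0:ℂ) 1, (L z).re < 0 := by
    intro z hz
    have := hm hz
    rw [mem_ball_zero_iff, hnorm z hz] at this
    simpa using this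
  have hden : ∀ z ∈ ball (0:ℂ) 1, L z + (starRingEnd ℂ) (L 0) ≠ 0 := by
    intro z hz h
    have := congrArg Complex.re h
    simp at this
    linarith [hre z hz, hre 0 z0]
  have hder : ∀ z ∈ ball (0:ℂ) 1, HasDerivAt (fun z => (L z - L 0) / (L z + (starRingEnd ℂ) (L 0)))
      (((deriv k z / k z) * (L z + (starRingEnd ℂ) (L 0)) - (L z - L 0) * (deriv k z / k z)) /
        (L z + (starRingEnd ℂ) (L 0)) ^ 2) z := fun z hz =>
    ((hL z hz).sub_const _).div ((hL z hz).add_const _) (hden z hz)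
  have key := Complex.norm_deriv_le_one_of_mapsTo_ball (R := 1) (c := 0)
    (f := fun z => (L z - L 0) / (L z + (starRingEnd ℂ) (L 0)))
    (fun z hz => (hder z hz).differentiableAt.differentiableWithinAt) ?_ one_pos
  · rw [(hder 0 z0).deriv] at key
    have e1 : L 0 + (starRingEnd ℂ) (L 0) = ((2 * (L 0).re : ℝ) : ℂ) := by
      rw [Complex.add_conj]
    have hne := hden 0 z0
    have e2 : ((deriv k 0 / k 0) * (L 0 + (starRingEnd ℂ) (L 0)) - (L 0 - L 0) *
        (deriv k 0 / k 0)) / (L 0 + (starRingEnd ℂ) (L 0)) ^ 2 =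
        deriv k 0 / k 0 / (L 0 + (starRingEnd ℂ) (L 0)) := by
      field_simp
      ring
    rw [e2, e1, norm_div, norm_div, Complex.norm_real] at key
    have hn := hnorm 0 z0
    have hr := hre 0 z0
    have hlog : Real.log ‖k 0‖ = (L 0).re := by rw [hn, Real.log_exp]
    have hp : 0 < ‖k 0‖ := by simpa using h0 0 z0
    rw [Real.norm_of_nonpos (by linarith), div_le_one (by linarith), div_le_iff₀ hp] at key
    rw [Real.negMulLog, hlog]
    linarith
  · intro z hz
    have h1 : ‖L z - L 0‖ ≤ ‖L z + (starRingEnd ℂ) (L 0)‖ := by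
      have h2 : ‖L z + (starRingEnd ℂ) (L 0)‖ ^ 2 - ‖L z - L 0‖ ^ 2 = 4 * ((L z).re * (L 0).re) := by
        simp only [← Complex.normSq_eq_norm_sq, Complex.normSq_apply]
        simp
        ring
      have h3 := mul_pos_of_neg_of_neg (hre z hz) (hre 0 z0)
      have h4 : ‖L z - L 0‖ ^ 2 ≤ ‖L z + (starRingEnd ℂ) (L 0)‖ ^ 2 := by linarith
      exact le_of_sq_le_sq h4 (norm_nonneg _)
    simp only [sub_self, zero_div, mem_closedBall_zero_iff, norm_div]
    exact div_le_one_of_le₀ h1 (norm_nonneg _)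

lemma omit_val {ψ : ℂ → ℂ} (hψ : DifferentiableOn ℂ ψ (ball 0 1))
    (hm : MapsTo ψ (ball 0 1) (ball 0 1)) {a : ℂ} (ha : ‖a‖ < 1)
    (h0 : ∀ z ∈ ball (0:ℂ) 1, ψ z ≠ a) {t : ℂ} (ht : ‖t‖ < 1) :
    ‖deriv ψ t‖ * (1 - ‖t‖ ^ 2) / (1 - ‖ψ t‖ ^ 2) ≤ dl ‖mob a (ψ t)‖ := by
  have hnt : ‖-t‖ < 1 := by simpa using ht
  have z0 : ‖(0:ℂ)‖ < 1 := by simp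
  have hψt : ‖ψ t‖ < 1 := by simpa using hm (show t ∈ ball (0:ℂ) 1 by simpa using ht)
  have hmem : ∀ w : ℂ, ‖w‖ < 1 → ‖ψ (mob (-t) w)‖ < 1 := fun w hw => by
    simpa using hm (show mob (-t) w ∈ ball (0:ℂ) 1 by simpa using mob_lt hnt hw)
  have h1 : ∀ w : ℂ, ‖w‖ < 1 → HasDerivAt (fun w => ψ (mob (-t) w))
      (deriv ψ (mob (-t) w) * deriv (mob (-t)) w) w := fun w hw =>
    HasDerivAt.comp w (hψ.differentiableAt
      (isOpen_ball.mem_nhds (by simpa using mob_lt hnt hw))).hasDerivAt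
      (mob_diffAt hnt hw).hasDerivAt
  have h2 : ∀ w : ℂ, ‖w‖ < 1 → HasDerivAt (fun w => mob a (ψ (mob (-t) w)))
      (deriv (mob a) (ψ (mob (-t) w)) * (deriv ψ (mob (-t) w) * deriv (mob (-t)) w)) w :=
    fun w hw => HasDerivAt.comp (h₂ := mob a) w (mob_diffAt ha (hmem w hw)).hasDerivAt (h1 w hw)
  have key := omit_zero (k := fun w => mob a (ψ (mob (-t) w)))
    (fun w hw => (h2 w (by simpa using hw)).differentiableAt.differentiableWithinAt) ?_ ?_
  · rw [(h2 0 z0).deriv, norm_mul, norm_mul, mob_deriv_norm ha (hmem 0 z0), mob_deriv_norm hnt z0,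
      mob_zero] at key
    have p1 := sq_pos' hψt
    have p2 := sq_pos' (mob_lt ha hψt)
    rw [dl, le_div_iff₀ p2]
    refine le_trans (le_of_eq ?_) key
    simp
    field_simp
  · intro w hw
    have hw : ‖w‖ < 1 := by simpa using hw
    simpa using mob_lt ha (hmem w hw)
  · intro w hw h
    have hw : ‖w‖ < 1 := by simpa using hw
    have h3 := div_eq_zero_iff.mp h
    rcases h3 with h3 | h3
    · exact h0 (mob (-t) w) (by simpa using mob_lt hnt hw) (sub_eq_zero.mp h3)
    · exact mob_den_ne ha (hmem w hw) h3

lemma dl_lt_one {s : ℝ} (h0 : 0 ≤ s) (h1 : s < 1) : dl s < 1 := by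
  rcases h0.eq_or_lt with rfl | hs
  · simp [dl]
  · have hx : 0 < -Real.log s := by linarith [Real.log_neg hs h1]
    have h2 := Real.self_lt_sinh_iff.mpr hx
    rw [Real.sinh_eq, neg_neg, Real.exp_neg, Real.exp_log hs] at h2
    rw [dl, div_lt_one (by nlinarith), Real.negMulLog]
    have h3 : s * (-Real.log s) < s * ((s⁻¹ - s) / 2) := mul_lt_mul_of_pos_left h2 hs
    have h4 : s * ((s⁻¹ - s) / 2) = (1 - s ^ 2) / 2 := by field_simp
    linarith

lemma dl_contAt {s : ℝ} (h0 : 0 ≤ s) (h1 : s < 1) : ContinuousAt dl s := by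
  unfold dl
  have : 1 - s ^ 2 ≠ 0 := by nlinarith
  exact ((Real.continuous_negMulLog.const_mul 2).continuousAt).div (by fun_prop) this

lemma dl_bound {s₀ : ℝ} (h0 : 0 ≤ s₀) (h1 : s₀ < 1) :
    ∃ δ, 0 ≤ δ ∧ δ < 1 ∧ ∀ s, 0 ≤ s → s ≤ s₀ → dl s ≤ δ := by
  obtain ⟨x, hx, hmax⟩ := isCompact_Icc.exists_isMaxOn (nonempty_Icc.mpr h0)
    (f := dl) (fun s hs => (dl_contAt hs.1 (hs.2.trans_lt h1)).continuousWithinAt)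
  refine ⟨dl x, ?_, dl_lt_one hx.1 (hx.2.trans_lt h1), fun s a b => hmax ⟨a, b⟩⟩
  have := hmax (show (0:ℝ) ∈ Icc 0 s₀ from ⟨le_rfl, h0⟩)
  simpa [dl] using this

lemma cover_on {φ : ℂ → ℂ} {U : Set ℂ} (hU : IsOpen U) (hφ : IsHoloCover φ U) :
    IsCoveringMapOn (fun x : ball (0:ℂ) 1 => φ x) U := by
  obtain ⟨_, h, ht⟩ := hφ
  refine IsCoveringMapOn.of_isCoveringMap_subtype hU (fun x => h x.2) ?_
  intro x
  obtain ⟨hd, t, hx⟩ := ht x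
  exact @IsEvenlyCovered.of_trivialization _ _ _ _ _ _ _ hd x t hx

lemma cover_local {φ : ℂ → ℂ} {U : Set ℂ} (hU : IsOpen U) (hφ : IsHoloCover φ U) {t₀ : ℂ}
    (ht₀ : t₀ ∈ ball (0:ℂ) 1) : ∃ g : ℂ → ℂ, g (φ t₀) = t₀ ∧
      ∀ᶠ w in 𝓝 (φ t₀), ContinuousAt g w ∧ g w ∈ ball (0:ℂ) 1 ∧ φ (g w) = w := by
  obtain ⟨e, he, hpe⟩ := (cover_on hU hφ).isLocalHomeomorphOn ⟨t₀, ht₀⟩ (hφ.2.1 ht₀)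
  have hval : ∀ x : ball (0:ℂ) 1, e x = φ x := fun x => (congrFun hpe x).symm
  refine ⟨fun w => (e.symm w : ℂ), ?_, ?_⟩
  · have := e.left_inv he
    rw [hval] at this
    show ((e.symm (φ t₀) : ball (0:ℂ) 1) : ℂ) = t₀
    rw [this]
  · have hmem : φ t₀ ∈ e.target := by
      have := e.map_source he
      rwa [hval] at this
    filter_upwards [e.open_target.mem_nhds hmem] with w hw
    refine ⟨continuous_subtype_val.continuousAt.comp (e.continuousAt_symm hw), (e.symm w).2, ?_⟩
    rw [← hval, e.right_inv hw]

lemma cover_deriv {φ : ℂ → ℂ} {U : Set ℂ} (hU : IsOpen U) (hφ : IsHoloCover φ U) {t₀ : ℂ}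
    (ht₀ : t₀ ∈ ball (0:ℂ) 1) : deriv φ t₀ ≠ 0 := by
  obtain ⟨g, hg0, hg⟩ := cover_local hU hφ ht₀
  have hda : ∀ t ∈ ball (0:ℂ) 1, HasDerivAt φ (deriv φ t) t := fun t ht =>
    (hφ.1.differentiableAt (isOpen_ball.mem_nhds ht)).hasDerivAt
  have han : AnalyticAt ℂ (deriv φ) t₀ :=
    (hφ.1.deriv isOpen_ball).analyticAt (isOpen_ball.mem_nhds ht₀)
  have hgc : ContinuousAt g (φ t₀) := hg.self_of_nhds.1
  have hgt : Tendsto g (𝓝 (φ t₀)) (𝓝 t₀) := by simpa [ContinuousAt, hg0] using hgc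
  have hne : ∀ᶠ t in 𝓝[≠] t₀, deriv φ t ≠ 0 := by
    rcases han.eventually_eq_zero_or_eventually_ne_zero with h | h
    · exfalso
      obtain ⟨ε, hε, hb⟩ := Metric.eventually_nhds_iff_ball.mp (h.and (isOpen_ball.mem_nhds ht₀))
      have hc : ∀ t ∈ ball t₀ ε, φ t = φ t₀ := fun t ht =>
        isOpen_ball.is_const_of_deriv_eq_zero (convex_ball t₀ ε).isPreconnected
          (fun t ht => (hda t (hb t ht).2).differentiableAt.differentiableWithinAt)
          (fun t ht => (hb t ht).1) ht (mem_ball_self hε)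
      have h1 : ∀ᶠ w in 𝓝 (φ t₀), w = φ t₀ := by
        filter_upwards [hg, hgt (ball_mem_nhds t₀ hε)] with w hw hw2
        rw [← hw.2.2]
        exact hc _ hw2
      have h2 : ∀ᶠ w in 𝓝[≠] (φ t₀), False := by
        filter_upwards [h1.filter_mono nhdsWithin_le_nhds, self_mem_nhdsWithin] with w a b
        exact b a
      exact h2.exists.choose_spec
    · exact h
  have hd : ∀ᶠ w in 𝓝[≠] (φ t₀), DifferentiableAt ℂ g w := by
    have hne' : ∀ᶠ t in 𝓝 t₀, t ≠ t₀ → deriv φ t ≠ 0 := by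
      simpa [eventually_nhdsWithin_iff] using hne
    filter_upwards [hg.eventually_nhds.filter_mono nhdsWithin_le_nhds, self_mem_nhdsWithin,
      (hgt.eventually hne').filter_mono nhdsWithin_le_nhds] with w hw hw2 hw3
    have hw' := hw.self_of_nhds
    have : g w ≠ t₀ := by
      intro h
      apply hw2
      have := hw'.2.2
      rw [h] at this
      exact this.symm
    exact (HasDerivAt.of_local_left_inverse hw'.1 (hda _ hw'.2.1) (hw3 this)
      (hw.mono fun y hy => hy.2.2)).differentiableAt
  have hga : DifferentiableAt ℂ g (φ t₀) :=
    (Complex.analyticAt_of_differentiable_on_punctured_nhds_of_continuousAt hd hgc).differentiableAt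
  have hcomp : HasDerivAt (fun w => φ (g w)) (deriv φ t₀ * deriv g (φ t₀)) (φ t₀) := by
    have : HasDerivAt φ (deriv φ t₀) (g (φ t₀)) := by rw [hg0]; exact hda _ ht₀
    exact HasDerivAt.comp (φ t₀) this hga.hasDerivAt
  have hid : HasDerivAt (fun w => φ (g w)) 1 (φ t₀) :=
    (hasDerivAt_id (φ t₀)).congr_of_eventuallyEq (hg.mono fun y hy => hy.2.2)
  have := hcomp.unique hid
  intro h
  rw [h] at this
  simp at this

lemma cover_local' {φ : ℂ → ℂ} {U : Set ℂ} (hU : IsOpen U) (hφ : IsHoloCover φ U) {t₀ : ℂ}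
    (ht₀ : t₀ ∈ ball (0:ℂ) 1) : ∃ g : ℂ → ℂ, g (φ t₀) = t₀ ∧
      ∀ᶠ w in 𝓝 (φ t₀), HasDerivAt g (deriv φ (g w))⁻¹ w ∧ g w ∈ ball (0:ℂ) 1 ∧ φ (g w) = w := by
  obtain ⟨g, hg0, hg⟩ := cover_local hU hφ ht₀
  refine ⟨g, hg0, ?_⟩
  filter_upwards [hg.eventually_nhds] with w hw
  have hw' := hw.self_of_nhds
  exact ⟨HasDerivAt.of_local_left_inverse hw'.1
    (hφ.1.differentiableAt (isOpen_ball.mem_nhds hw'.2.1)).hasDerivAt (cover_deriv hU hφ hw'.2.1)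
      (hw.mono fun y hy => hy.2.2), hw'.2⟩

lemma cover_fiber_le {φ : ℂ → ℂ} {U : Set ℂ} (hU : IsOpen U) (hφ : IsHoloCover φ U) {t₁ t₂ : ℂ}
    (ht₁ : t₁ ∈ ball (0:ℂ) 1) (ht₂ : t₂ ∈ ball (0:ℂ) 1) (h : φ t₁ = φ t₂) :
    ‖deriv φ t₁‖ * (1 - ‖t₁‖ ^ 2) ≤ ‖deriv φ t₂‖ * (1 - ‖t₂‖ ^ 2) := by
  classical
  have cov := cover_on hU hφ
  have hcs : ContractibleSpace (ball (0:ℂ) 1) :=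
    (convex_ball (0:ℂ) 1).contractibleSpace ⟨0, by simp⟩
  have hlp : LocallyPathConnectedSpace (ball (0:ℂ) 1) := isOpen_ball.locallyPathConnectedSpace
  let F : C(ball (0:ℂ) 1, ℂ) := ⟨fun x => φ x, hφ.1.continuousOn.domRestrict⟩
  obtain ⟨H, ⟨hH0, hH⟩, -⟩ := cov.existsUnique_continuousMap_lifts F (a₀ := ⟨t₁, ht₁⟩)
    (e₀ := ⟨t₂, ht₂⟩) h.symm (fun a => hφ.2.1 a.2)
  have hH' : ∀ x : ball (0:ℂ) 1, φ (H x) = φ x := fun x => congrFun hH x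
  let k : ℂ → ℂ := fun z => if hz : z ∈ ball (0:ℂ) 1 then (H ⟨z, hz⟩ : ℂ) else 0
  have hk : ∀ x : ball (0:ℂ) 1, k x = H x := fun x => by
    simp only [k]
    rw [dif_pos x.2]
  have hkm : MapsTo k (ball 0 1) (ball 0 1) := fun z hz => by
    have := hk ⟨z, hz⟩
    simp only at this
    rw [this]
    exact (H ⟨z, hz⟩).2
  have hkφ : ∀ z ∈ ball (0:ℂ) 1, φ (k z) = φ z := fun z hz => by
    have := hk ⟨z, hz⟩
    simp only at this
    rw [this]
    exact hH' ⟨z, hz⟩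
  have hkc : ContinuousOn k (ball 0 1) := by
    rw [continuousOn_iff_continuous_domRestrict]
    have : (ball (0:ℂ) 1).domRestrict k = fun x => (H x : ℂ) := funext hk
    rw [this]
    exact continuous_subtype_val.comp H.continuous
  have hda : ∀ t ∈ ball (0:ℂ) 1, HasDerivAt φ (deriv φ t) t := fun t ht =>
    (hφ.1.differentiableAt (isOpen_ball.mem_nhds ht)).hasDerivAt
  have hkd : ∀ z ∈ ball (0:ℂ) 1, HasDerivAt k ((deriv φ (k z))⁻¹ * deriv φ z) z := by
    intro z hz
    have hkz := hkm hz
    have hs : HasStrictDerivAt φ (deriv φ (k z)) (k z) :=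
      (hφ.1.analyticAt (isOpen_ball.mem_nhds hkz)).hasStrictDerivAt
    have hne := cover_deriv hU hφ hkz
    have hl := hs.to_localInverse hne
    have hli : ∀ᶠ x in 𝓝 (k z), hs.localInverse φ _ _ hne (φ x) = x :=
      (hs.hasStrictFDerivAt_equiv hne).eventually_left_inverse
    have hev : k =ᶠ[𝓝 z] fun y => hs.localInverse φ _ _ hne (φ y) := by
      have hkcz : ContinuousAt k z := hkc.continuousAt (isOpen_ball.mem_nhds hz)
      filter_upwards [hkcz.eventually hli, isOpen_ball.mem_nhds hz] with y hy hyb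
      rw [hkφ y hyb] at hy
      exact hy.symm
    refine HasDerivAt.congr_of_eventuallyEq ?_ hev
    have hl' := hl.hasDerivAt
    rw [hkφ z hz] at hl'
    exact HasDerivAt.comp z hl' (hda z hz)
  have hsp := schwarz_pick_deriv (f := k)
    (fun z hz => (hkd z hz).differentiableAt.differentiableWithinAt) hkm (a := t₁) (by simpa using ht₁)
  have hk1 : k t₁ = t₂ := by
    have := hk ⟨t₁, ht₁⟩
    simp only at this
    rw [this, hH0]
  have hne := cover_deriv hU hφ ht₂
  rw [(hkd t₁ ht₁).deriv, hk1, norm_mul, norm_inv] at hsp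
  have hp : 0 < ‖deriv φ t₂‖ := by simpa using hne
  have := mul_le_mul_of_nonneg_left hsp hp.le
  refine le_trans (le_of_eq ?_) this
  field_simp

lemma cover_fiber {φ : ℂ → ℂ} {U : Set ℂ} (hU : IsOpen U) (hφ : IsHoloCover φ U) {t₁ t₂ : ℂ}
    (ht₁ : t₁ ∈ ball (0:ℂ) 1) (ht₂ : t₂ ∈ ball (0:ℂ) 1) (h : φ t₁ = φ t₂) :
    ‖deriv φ t₁‖ * (1 - ‖t₁‖ ^ 2) = ‖deriv φ t₂‖ * (1 - ‖t₂‖ ^ 2) :=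
  le_antisymm (cover_fiber_le hU hφ ht₁ ht₂ h) (cover_fiber_le hU hφ ht₂ ht₁ h.symm)

lemma slope_sq {k : ℂ → ℂ} {c z₀ : ℂ} (h : HasDerivAt k c z₀) (h0 : k z₀ = 0) :
    Tendsto (fun z => ‖k z‖ ^ 2 / ‖z - z₀‖ ^ 2) (𝓝[≠] z₀) (𝓝 (‖c‖ ^ 2)) := by
  have h1 := ((hasDerivAt_iff_tendsto_slope.mp h).norm).pow 2
  refine h1.congr fun z => ?_
  rw [slope_def_field, h0, sub_zero, norm_div, div_pow]

lemma kprod {k₁ k₂ k₃ k₄ : ℂ → ℂ} {c₁ c₂ c₃ c₄ z₀ : ℂ} (h₁ : HasDerivAt k₁ c₁ z₀)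
    (h₂ : HasDerivAt k₂ c₂ z₀) (h₃ : HasDerivAt k₃ c₃ z₀) (h₄ : HasDerivAt k₄ c₄ z₀)
    (e₁ : k₁ z₀ = 0) (e₂ : k₂ z₀ = 0) (e₃ : k₃ z₀ = 0) (e₄ : k₄ z₀ = 0)
    (hc : ‖c₁‖ ^ 2 + ‖c₂‖ ^ 2 < ‖c₃‖ ^ 2 + ‖c₄‖ ^ 2) :
    ∀ᶠ z in 𝓝[≠] z₀, (1 - ‖k₃ z‖ ^ 2) * (1 - ‖k₄ z‖ ^ 2) < (1 - ‖k₁ z‖ ^ 2) * (1 - ‖k₂ z‖ ^ 2) := by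
  have s₁ := slope_sq h₁ e₁
  have s₂ := slope_sq h₂ e₂
  have s₃ := slope_sq h₃ e₃
  have s₄ := slope_sq h₄ e₄
  have c : Tendsto (fun z => ‖k₄ z‖ ^ 2) (𝓝[≠] z₀) (𝓝 0) := by
    have : Tendsto (fun z => ‖k₄ z‖ ^ 2) (𝓝 z₀) (𝓝 (‖k₄ z₀‖ ^ 2)) := h₄.continuousAt.norm.pow 2
    rw [e₄] at this
    simpa using this.mono_left nhdsWithin_le_nhds
  have s₅ := s₃.mul c
  have L := (s₁.add s₂).add s₅
  rw [mul_zero, add_zero] at L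
  have key := L.eventually_lt (s₃.add s₄) hc
  filter_upwards [key, self_mem_nhdsWithin] with z hz hne
  have hp : 0 < ‖z - z₀‖ ^ 2 := by
    have : z - z₀ ≠ 0 := sub_ne_zero.mpr hne
    positivity
  generalize ‖z - z₀‖ ^ 2 = N at hz hp
  have hz' := mul_lt_mul_of_pos_right hz hp
  have : ‖k₁ z‖ ^ 2 + ‖k₂ z‖ ^ 2 + ‖k₃ z‖ ^ 2 * ‖k₄ z‖ ^ 2 < ‖k₃ z‖ ^ 2 + ‖k₄ z‖ ^ 2 := by
    have hp' := hp.ne'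
    field_simp at hz'
    linarith
  nlinarith [mul_nonneg (sq_nonneg ‖k₁ z‖) (sq_nonneg ‖k₂ z‖)]

def Fq (f φ : ℂ → ℂ) (R : ℝ) (z t : ℂ) : ℝ :=
  R * (1 - ‖z‖ ^ 2) / (R ^ 2 - ‖z‖ ^ 2) * (‖deriv φ t‖ * (1 - ‖t‖ ^ 2) / (1 - ‖f z‖ ^ 2))

lemma one_sub_mob {a z : ℂ} (ha : ‖a‖ < 1) (hz : ‖z‖ < 1) :
    1 - ‖z‖ ^ 2 = (1 - ‖mob a z‖ ^ 2) * ‖1 - (starRingEnd ℂ) a * z‖ ^ 2 / (1 - ‖a‖ ^ 2) := by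
  rw [mob_one_sub ha hz]
  have h : ‖1 - (starRingEnd ℂ) a * z‖ ≠ 0 := by simpa using mob_den_ne ha hz
  have := (sq_pos' ha).ne'
  rw [div_mul_cancel₀ _ (pow_ne_zero 2 h), mul_div_cancel_left₀ _ this]

lemma real_ineq {A B C E D : ℝ} (hA : 0 < A) (hB : 0 ≤ B) (hD : 0 < D) (hD1 : D ≤ 1)
    (hBA : B ≤ A) (h : A < C * D) (hE : E = B / D) : A ^ 2 + E ^ 2 < C ^ 2 + B ^ 2 := by
  have hC : A / D < C := by rwa [div_lt_iff₀ hD]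
  have h1 : (A / D) ^ 2 < C ^ 2 := pow_lt_pow_left₀ hC (by positivity) two_ne_zero
  have h2 : 1 ≤ 1 / D ^ 2 := by
    rw [le_div_iff₀ (by positivity)]
    nlinarith
  have h3 : B ^ 2 ≤ A ^ 2 := pow_le_pow_left₀ hB hBA 2
  rw [hE, div_pow]
  rw [div_pow] at h1
  have h4 : 0 ≤ (A ^ 2 - B ^ 2) * (1 / D ^ 2 - 1) := mul_nonneg (by linarith) (by linarith)
  have e1 : A ^ 2 / D ^ 2 = A ^ 2 * (1 / D ^ 2) := by ring
  have e2 : B ^ 2 / D ^ 2 = B ^ 2 * (1 / D ^ 2) := by ring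
  rw [e1] at h1
  rw [e2]
  nlinarith

lemma no_max {f φ : ℂ → ℂ} {U : Set ℂ} (hU : IsOpen U) (hφ : IsHoloCover φ U)
    (hUb : U ⊆ ball 0 1) (hf : DifferentiableOn ℂ f (ball 0 1))
    (hm : MapsTo f (ball 0 1) (ball 0 1)) {R : ℝ} (hR0 : 0 < R) (hR1 : R < 1) {z₀ t₀ : ℂ}
    (hz₀ : ‖z₀‖ < R) (ht₀ : ‖t₀‖ < 1) (hw : φ t₀ = f z₀) (h1 : 1 < Fq f φ R z₀ t₀)
    (hmax : ∀ᶠ z in 𝓝 z₀, ∀ t ∈ ball (0:ℂ) 1, φ t = f z → Fq f φ R z t ≤ Fq f φ R z₀ t₀) :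
    False := by
  have ht₀b : t₀ ∈ ball (0:ℂ) 1 := by simpa using ht₀
  have hz₀1 : ‖z₀‖ < 1 := hz₀.trans hR1
  have hz₀b : z₀ ∈ ball (0:ℂ) 1 := by simpa using hz₀1
  have hw₀ : ‖f z₀‖ < 1 := by simpa using hm hz₀b
  have hRn : ∀ z : ℂ, ‖z / R‖ = ‖z‖ / R := fun z => by
    rw [norm_div, Complex.norm_real, Real.norm_of_nonneg hR0.le]
  have hzR : ∀ z : ℂ, ‖z‖ < R → ‖z / R‖ < 1 := fun z hz => by
    rw [hRn, div_lt_one hR0]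
    exact hz
  have hfd : ∀ z ∈ ball (0:ℂ) 1, HasDerivAt f (deriv f z) z := fun z hz =>
    (hf.differentiableAt (isOpen_ball.mem_nhds hz)).hasDerivAt
  obtain ⟨g, hg0, hg⟩ := cover_local' hU hφ ht₀b
  rw [hw] at hg0 hg
  have hfc : Tendsto f (𝓝 z₀) (𝓝 (f z₀)) := (hfd z₀ hz₀b).continuousAt
  set h : ℂ → ℂ := fun z => g (f z) with hh
  have hh0 : h z₀ = t₀ := hg0
  have hev : ∀ᶠ z in 𝓝 z₀, HasDerivAt h ((deriv φ (h z))⁻¹ * deriv f z) z ∧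
      h z ∈ ball (0:ℂ) 1 ∧ φ (h z) = f z ∧ ‖z‖ < R := by
    filter_upwards [hfc.eventually hg, isOpen_ball.mem_nhds (show z₀ ∈ ball (0:ℂ) R by simpa using hz₀)]
      with z hz hzb
    have hzR : ‖z‖ < R := by simpa using hzb
    exact ⟨HasDerivAt.comp z hz.1 (hfd z (by simpa using hzR.trans hR1)), hz.2.1, hz.2.2, hzR⟩
  set H : ℂ → ℂ := fun z => deriv φ (h z) * (1 - (starRingEnd ℂ) z₀ * z) ^ 2 *
    (1 - (starRingEnd ℂ) t₀ * h z) ^ 2 / ((1 - (starRingEnd ℂ) (z₀ / R) * (z / R)) ^ 2 *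
      (1 - (starRingEnd ℂ) (f z₀) * f z) ^ 2) with hH
  set C : ℝ := (1 / R) * ((1 - ‖z₀ / R‖ ^ 2) * (1 - ‖f z₀‖ ^ 2) /
    ((1 - ‖z₀‖ ^ 2) * (1 - ‖t₀‖ ^ 2))) with hC
  have pz := sq_pos' hz₀1
  have pt := sq_pos' ht₀
  have pw := sq_pos' hw₀
  have pR := sq_pos' (hzR z₀ hz₀)
  have hCpos : 0 < C := by positivity
  have hform : ∀ z : ℂ, ‖z‖ < R → ‖h z‖ < 1 →
      Fq f φ R z (h z) * ((1 - ‖mob (z₀ / R) (z / R)‖ ^ 2) * (1 - ‖mob (f z₀) (f z)‖ ^ 2)) =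
      C * ‖H z‖ * ((1 - ‖mob z₀ z‖ ^ 2) * (1 - ‖mob t₀ (h z)‖ ^ 2)) := by
    intro z hz hhz
    have hz1 : ‖z‖ < 1 := hz.trans hR1
    have hfz : ‖f z‖ < 1 := by simpa using hm (show z ∈ ball (0:ℂ) 1 by simpa using hz1)
    have q3 := sq_pos' (mob_lt (hzR z₀ hz₀) (hzR z hz))
    have q4 := sq_pos' (mob_lt hw₀ hfz)
    have d1 : ‖1 - (starRingEnd ℂ) z₀ * z‖ ≠ 0 := by simpa using mob_den_ne hz₀1 hz1
    have d2 : ‖1 - (starRingEnd ℂ) t₀ * h z‖ ≠ 0 := by simpa using mob_den_ne ht₀ hhz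
    have d3 : ‖1 - (starRingEnd ℂ) (z₀ / R) * (z / R)‖ ≠ 0 := by
      rw [norm_ne_zero_iff]
      exact mob_den_ne (hzR z₀ hz₀) (hzR z hz)
    have d4 : ‖1 - (starRingEnd ℂ) (f z₀) * f z‖ ≠ 0 := by simpa using mob_den_ne hw₀ hfz
    have eR : R ^ 2 - ‖z‖ ^ 2 = R ^ 2 * (1 - ‖z / R‖ ^ 2) := by
      rw [hRn]
      field_simp
    rw [Fq, eR, one_sub_mob (hzR z₀ hz₀) (hzR z hz), one_sub_mob hz₀1 hz1, one_sub_mob ht₀ hhz,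
      one_sub_mob hw₀ hfz]
    have eH : ‖H z‖ = ‖deriv φ (h z)‖ * ‖1 - (starRingEnd ℂ) z₀ * z‖ ^ 2 *
      ‖1 - (starRingEnd ℂ) t₀ * h z‖ ^ 2 / (‖1 - (starRingEnd ℂ) (z₀ / R) * (z / R)‖ ^ 2 *
      ‖1 - (starRingEnd ℂ) (f z₀) * f z‖ ^ 2) := by
      simp only [hH, norm_div, norm_mul, norm_pow]
    rw [eH, hC]
    generalize ‖1 - (starRingEnd ℂ) z₀ * z‖ = a1 at *
    generalize ‖1 - (starRingEnd ℂ) t₀ * h z‖ = a2 at *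
    generalize ‖1 - (starRingEnd ℂ) (z₀ / R) * (z / R)‖ = a3 at *
    generalize ‖1 - (starRingEnd ℂ) (f z₀) * f z‖ = a4 at *
    generalize 1 - ‖mob (z₀ / R) (z / R)‖ ^ 2 = b3 at *
    generalize 1 - ‖mob (f z₀) (f z)‖ ^ 2 = b4 at *
    generalize 1 - ‖mob t₀ (h z)‖ ^ 2 = b2 at *
    generalize 1 - ‖mob z₀ z‖ ^ 2 = b1 at *
    generalize 1 - ‖z₀ / R‖ ^ 2 = e3 at *
    generalize 1 - ‖f z₀‖ ^ 2 = e4 at *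
    generalize 1 - ‖t₀‖ ^ 2 = e2 at *
    generalize 1 - ‖z₀‖ ^ 2 = e1 at *
    field_simp
  have hF0 : Fq f φ R z₀ t₀ = C * ‖H z₀‖ := by
    have := hform z₀ hz₀ (by rw [hh0]; exact ht₀)
    rw [hh0] at this
    simpa [mob_self] using this
  have hHpos : 0 < ‖H z₀‖ := by
    have : 0 < C * ‖H z₀‖ := by rw [← hF0]; linarith
    exact pos_of_mul_pos_right this hCpos.le
  -- derivatives
  have hφb : MapsTo φ (ball 0 1) (ball 0 1) := fun t ht => hUb (hφ.2.1 ht)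
  have dφ : deriv φ t₀ ≠ 0 := cover_deriv hU hφ ht₀b
  have k1 : HasDerivAt (mob z₀) (deriv (mob z₀) z₀) z₀ := (mob_diffAt hz₀1 hz₀1).hasDerivAt
  have hh' := hev.self_of_nhds.1
  have k2 : HasDerivAt (fun z => mob t₀ (h z)) (deriv (mob t₀) t₀ *
      ((deriv φ (h z₀))⁻¹ * deriv f z₀)) z₀ := by
    have : HasDerivAt (mob t₀) (deriv (mob t₀) t₀) (h z₀) := by
      rw [hh0]
      exact (mob_diffAt ht₀ ht₀).hasDerivAt
    exact HasDerivAt.comp z₀ this hh'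
  have k3 : HasDerivAt (fun z => mob (z₀ / R) (z / R)) (deriv (mob (z₀ / R)) (z₀ / R) * (1 / R)) z₀ :=
    HasDerivAt.comp (h₂ := mob (z₀ / R)) z₀ (mob_diffAt (hzR z₀ hz₀) (hzR z₀ hz₀)).hasDerivAt
      ((hasDerivAt_id z₀).div_const (R:ℂ))
  have k4 : HasDerivAt (fun z => mob (f z₀) (f z)) (deriv (mob (f z₀)) (f z₀) * deriv f z₀) z₀ :=
    HasDerivAt.comp (h₂ := mob (f z₀)) z₀ (mob_diffAt hw₀ hw₀).hasDerivAt (hfd z₀ hz₀b)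
  have hprod := kprod k1 k2 k3 k4 (mob_self _) (by simp [hh0, mob_self]) (mob_self _) (mob_self _) (by
    have hφp : 0 < ‖deriv φ t₀‖ := by simpa using dφ
    have sp1 := schwarz_pick_deriv hφ.1 hφb ht₀
    have sp2 := schwarz_pick_deriv hf hm hz₀1
    rw [hw] at sp1
    rw [hh0]
    simp only [norm_mul, norm_div, norm_inv, norm_one, Complex.norm_real,
      Real.norm_of_nonneg hR0.le]
    rw [mob_deriv_norm hz₀1 hz₀1, mob_deriv_norm ht₀ ht₀, mob_deriv_norm hw₀ hw₀,
      mob_deriv_norm (hzR z₀ hz₀) (hzR z₀ hz₀)]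
    simp only [mob_self, norm_zero]
    have eR : R ^ 2 - ‖z₀‖ ^ 2 = R ^ 2 * (1 - ‖z₀ / R‖ ^ 2) := by
      rw [hRn]
      field_simp
    rw [Fq, eR] at h1
    generalize 1 - ‖z₀ / R‖ ^ 2 = e3 at *
    generalize 1 - ‖f z₀‖ ^ 2 = e4 at *
    generalize 1 - ‖t₀‖ ^ 2 = e2 at *
    generalize 1 - ‖z₀‖ ^ 2 = e1 at *
    generalize ‖deriv φ t₀‖ = p at *
    have : 0 ≤ ‖deriv f z₀‖ := norm_nonneg _
    generalize ‖deriv f z₀‖ = m at *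
    apply real_ineq (D := p * e2 / e4)
    · positivity
    · positivity
    · positivity
    · rw [div_le_one pw]; exact sp1
    · simp only [ne_eq, OfNat.ofNat_ne_zero, not_false_eq_true, zero_pow, sub_zero]
      rw [div_mul_eq_mul_div, div_le_div_iff₀ pw pz]
      linarith
    · simp only [ne_eq, OfNat.ofNat_ne_zero, not_false_eq_true, zero_pow, sub_zero]
      rw [div_lt_iff₀ pz]
      refine lt_of_lt_of_eq h1 ?_
      field_simp
    · field_simp)
  have hle : ∀ᶠ z in 𝓝 z₀, z ≠ z₀ → ‖H z‖ < ‖H z₀‖ := by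
    rw [eventually_nhdsWithin_iff] at hprod
    filter_upwards [hprod, hev, hmax] with z hp he hmx hne
    have hp := hp hne
    have hhz : ‖h z‖ < 1 := by simpa using he.2.1
    have hz := he.2.2.2
    have hfz : ‖f z‖ < 1 := by
      simpa using hm (show z ∈ ball (0:ℂ) 1 by simpa using hz.trans hR1)
    have q3 := sq_pos' (mob_lt (hzR z₀ hz₀) (hzR z hz))
    have q4 := sq_pos' (mob_lt hw₀ hfz)
    have hmx := hmx (h z) he.2.1 he.2.2.1
    have e := hform z hz hhz
    have q := mul_pos q3 q4
    rw [hF0] at hmx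
    have h5 := mul_le_mul_of_nonneg_right hmx q.le
    rw [e] at h5
    set Q := (1 - ‖mob (z₀ / R) (z / R)‖ ^ 2) * (1 - ‖mob (f z₀) (f z)‖ ^ 2)
    set P := (1 - ‖mob z₀ z‖ ^ 2) * (1 - ‖mob t₀ (h z)‖ ^ 2)
    have h6 : ‖H z‖ * P ≤ ‖H z₀‖ * Q := by
      have h5' : C * (‖H z‖ * P) ≤ C * (‖H z₀‖ * Q) :=
        (mul_assoc C ‖H z‖ P).symm.le.trans (h5.trans (mul_assoc C ‖H z₀‖ Q).le)
      exact le_of_mul_le_mul_left h5' hCpos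
    by_contra hcon
    push Not at hcon
    have : ‖H z₀‖ * P ≤ ‖H z‖ * P := mul_le_mul_of_nonneg_right hcon (q.trans hp).le
    nlinarith
  have hHd : ∀ᶠ z in 𝓝 z₀, DifferentiableAt ℂ H z := by
    filter_upwards [hev] with z he
    have hhz : ‖h z‖ < 1 := by simpa using he.2.1
    have hz := he.2.2.2
    have hfz : ‖f z‖ < 1 := by
      simpa using hm (show z ∈ ball (0:ℂ) 1 by simpa using hz.trans hR1)
    have d3 := mob_den_ne (hzR z₀ hz₀) (hzR z hz)
    have d4 := mob_den_ne hw₀ hfz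
    have hhd := he.1.differentiableAt
    have hfd' := (hfd z (by simpa using hz.trans hR1)).differentiableAt
    have hdφ : DifferentiableAt ℂ (fun z => deriv φ (h z)) z :=
      DifferentiableAt.comp (g := deriv φ) z
        ((hφ.1.deriv isOpen_ball).differentiableAt (isOpen_ball.mem_nhds he.2.1)) hhd
    refine DifferentiableAt.div ?_ ?_ (mul_ne_zero (pow_ne_zero 2 d3) (pow_ne_zero 2 d4))
    · exact (hdφ.mul (by fun_prop)).mul (by fun_prop)
    · fun_prop
  have hloc : IsLocalMax (norm ∘ H) z₀ := by
    filter_upwards [hle] with z hz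
    by_cases hzz : z = z₀
    · rw [hzz]
    · exact (hz hzz).le
  have hconst := Complex.eventually_eq_of_isLocalMax_norm hHd hloc
  have hF : ∀ᶠ z in 𝓝[≠] z₀, False := by
    filter_upwards [hconst.filter_mono nhdsWithin_le_nhds, hle.filter_mono nhdsWithin_le_nhds,
      self_mem_nhdsWithin] with z a b c
    have := b c
    rw [a] at this
    exact lt_irrefl _ this
  exact hF.exists.choose_spec

lemma const_ineq {δ r : ℝ} (hδ0 : 0 ≤ δ) (hδ1 : δ < 1) (hr : Real.exp (-1) < r) (hr1 : r < 1) :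
    r < Real.exp (Real.log r * ((1 - δ) / 2)) ∧
    Real.exp (Real.log r * ((1 - δ) / 2)) * (1 - r ^ 2) * δ ≤
      Real.exp (Real.log r * ((1 - δ) / 2)) ^ 2 - r ^ 2 := by
  have hr0 : 0 < r := (Real.exp_pos _).trans hr
  have hl0 : Real.log r < 0 := Real.log_neg hr0 hr1
  have hl1 : -1 < Real.log r := by rwa [Real.lt_log_iff_exp_lt hr0]
  obtain ⟨ε, hε⟩ : ∃ ε, ε = -Real.log r := ⟨_, rfl⟩
  have hlr : Real.log r = -ε := by rw [hε]; ring
  have hre : r = Real.exp (-ε) := by rw [← hlr, Real.exp_log hr0]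
  obtain ⟨κ, hκ⟩ : ∃ κ, κ = (1 - δ) / 2 := ⟨_, rfl⟩
  rw [← hκ, hlr]
  have e0 : 0 < ε := by linarith
  have e1 : ε < 1 := by linarith
  have k0 : 0 < κ := by linarith
  have k1 : κ ≤ 1 / 2 := by linarith
  have hsinh : Real.sinh ε * δ ≤ Real.sinh (ε * (1 - κ)) := by
    have h1 : Real.sinh (ε * (1 - κ)) =
        Real.sinh ε * Real.cosh (ε * κ) - Real.cosh ε * Real.sinh (ε * κ) := by
      rw [← Real.sinh_sub]
      congr 1
      ring
    have hs : 0 < Real.sinh ε := Real.sinh_pos_iff.mpr e0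
    have h2 : Real.sinh ε - Real.sinh (ε * (1 - κ)) ≤ κ * ε * Real.cosh ε := by
      have hmv := Convex.norm_image_sub_le_of_norm_deriv_le (f := Real.sinh) (C := Real.cosh ε)
        (s := Icc 0 ε) (x := ε * (1 - κ)) (y := ε) (fun x _ => Real.differentiable_sinh x)
        (fun x hx => by
          rw [Real.deriv_sinh, Real.norm_of_nonneg (Real.cosh_pos x).le, Real.cosh_le_cosh,
            abs_of_nonneg hx.1, abs_of_nonneg e0.le]
          exact hx.2) (convex_Icc 0 ε) ⟨by nlinarith, by nlinarith⟩ ⟨e0.le, le_rfl⟩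
      have e : ε - ε * (1 - κ) = κ * ε := by ring
      rw [e, Real.norm_of_nonneg (by positivity : 0 ≤ κ * ε)] at hmv
      have := (le_abs_self _).trans hmv
      linarith
    have h3 : Real.cosh ε ≤ 2 := by
      have : Real.cosh ε ≤ Real.cosh 1 := by
        rw [Real.cosh_le_cosh, abs_of_pos e0, abs_of_pos one_pos]
        exact e1.le
      have h4 : Real.cosh 1 ≤ 2 := by
        rw [Real.cosh_eq]
        have := Real.exp_one_lt_d9
        have h5 : Real.exp (-1) ≤ 1 := Real.exp_le_one_iff.mpr (by norm_num)
        linarith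
      linarith
    have h4 : ε < Real.sinh ε := Real.self_lt_sinh_iff.mpr e0
    have h5 : κ * ε * Real.cosh ε ≤ κ * Real.sinh ε * 2 := by
      have := (Real.cosh_pos ε).le
      gcongr
    have h6 : δ = 1 - 2 * κ := by linarith
    rw [h6]
    nlinarith
  constructor
  · rw [hre]
    apply Real.exp_lt_exp.mpr
    nlinarith
  · have hp : 0 < 2 * Real.exp (-ε) * Real.exp (-ε * κ) := by positivity
    have h := mul_le_mul_of_nonneg_left hsinh hp.le
    have a1 : 2 * Real.exp (-ε) * Real.exp (-ε * κ) * (Real.sinh ε * δ) =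
        Real.exp (-ε * κ) * (1 - r ^ 2) * δ := by
      rw [hre, Real.sinh_eq]
      have : Real.exp (-ε) * Real.exp ε = 1 := by rw [← Real.exp_add]; simp
      linear_combination (Real.exp (-ε * κ) * δ) * this
    have a2 : 2 * Real.exp (-ε) * Real.exp (-ε * κ) * Real.sinh (ε * (1 - κ)) =
        Real.exp (-ε * κ) ^ 2 - r ^ 2 := by
      rw [hre, Real.sinh_eq]
      have x1 : Real.exp (-ε) * Real.exp (ε * (1 - κ)) = Real.exp (-ε * κ) := by
        rw [← Real.exp_add]; congr 1; ring
      have x2 : Real.exp (-ε * κ) * Real.exp (-(ε * (1 - κ))) = Real.exp (-ε) := by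
        rw [← Real.exp_add]; congr 1; ring
      linear_combination Real.exp (-ε * κ) * x1 - Real.exp (-ε) * x2
    rw [a1, a2] at h
    exact h

lemma den_circ {r θ : ℝ} (w : ℂ) (hw : ‖w‖ = r) :
    ‖1 - (starRingEnd ℂ) w * (w * Complex.exp (θ * I))‖ ^ 2 = 1 - 2 * r ^ 2 * Real.cos θ + r ^ 4 := by
  have h1 : (starRingEnd ℂ) w * (w * Complex.exp (θ * I)) = ((r ^ 2 : ℝ) : ℂ) * Complex.exp (θ * I) := by
    rw [← mul_assoc, Complex.conj_mul', hw]
    push_cast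
    rfl
  rw [h1, Complex.exp_mul_I, ← Complex.ofReal_cos, ← Complex.ofReal_sin, ← Complex.normSq_eq_norm_sq,
    Complex.normSq_apply]
  simp only [Complex.sub_re, Complex.sub_im, Complex.mul_re, Complex.mul_im, Complex.add_re,
    Complex.add_im, Complex.ofReal_re, Complex.ofReal_im, Complex.I_re, Complex.I_im, Complex.one_re,
    Complex.one_im]
  have := Real.sin_sq_add_cos_sq θ
  linear_combination r ^ 4 * this

lemma hyp_le {z w : ℂ} {d : ℝ} (hz : ‖z‖ < 1) (hw : ‖w‖ < 1) (h : hypDist z w ≤ d) :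
    ‖mob z w‖ ≤ (Real.exp d - 1) / (Real.exp d + 1) := by
  have e : ‖z - w‖ / ‖1 - (starRingEnd ℂ) z * w‖ = ‖mob z w‖ := by
    rw [mob, norm_div, norm_sub_rev]
  have hl := mob_lt hz hw
  rw [hypDist, e, artanh] at h
  have h0 := norm_nonneg (mob z w)
  generalize ‖mob z w‖ = ρ at *
  have hp : 0 < 1 - ρ := by linarith
  have h1 : Real.log ((1 + ρ) / (1 - ρ)) ≤ d := by linarith
  rw [Real.log_le_iff_le_exp (by positivity), div_le_iff₀ hp] at h1
  have := Real.exp_pos d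
  rw [le_div_iff₀ (by linarith)]
  linarith

lemma geom {r : ℝ} (hr0 : 0 < r) (hr1 : r < 1) {q : ℕ} (hq : 2 ≤ q) {z : ℂ} (hz : ‖z‖ = r) :
    ∃ w ∈ rootsSet r q, ‖w‖ = r ∧
      ‖mob w z‖ ≤ ‖mob (r:ℂ) ((r : ℂ) * Complex.exp (2 * Real.pi * Complex.I / q))‖ := by
  have hq0 : (0:ℝ) < q := by positivity
  have hq2 : (2:ℝ) ≤ q := by exact_mod_cast hq
  have hpi := Real.pi_pos
  set α : ℝ := 2 * Real.pi / q with hα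
  have hα0 : 0 < α := by positivity
  have hαpi : α ≤ Real.pi := by
    rw [hα, div_le_iff₀ hq0]
    nlinarith
  set k : ℤ := ⌊z.arg / α⌋ with hk
  set θ : ℝ := z.arg - k * α with hθ
  have hθ0 : 0 ≤ θ := by
    have := Int.floor_le (z.arg / α)
    rw [le_div_iff₀ hα0] at this
    linarith
  have hθ1 : θ ≤ α := by
    have := Int.lt_floor_add_one (z.arg / α)
    rw [div_lt_iff₀ hα0] at this
    linarith
  have hcos : Real.cos α ≤ Real.cos θ := Real.cos_le_cos_of_nonneg_of_le_pi hθ0 hαpi hθ1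
  set w : ℂ := r * Complex.exp (((k * α : ℝ) : ℂ) * I) with hw
  have hwn : ‖w‖ = r := by
    rw [hw, norm_mul, Complex.norm_exp_ofReal_mul_I, Complex.norm_real, Real.norm_of_nonneg hr0.le,
      mul_one]
  have hzw : z = w * Complex.exp (θ * I) := by
    rw [hw, mul_assoc, ← Complex.exp_add]
    conv_lhs => rw [← Complex.norm_mul_exp_arg_mul_I z, hz]
    congr 2
    rw [hθ]
    push_cast
    ring
  refine ⟨w, ⟨Complex.exp (((k * α : ℝ) : ℂ) * I), ?_, rfl⟩, hwn, ?_⟩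
  · rw [← Complex.exp_nat_mul, Complex.exp_eq_one_iff]
    refine ⟨k, ?_⟩
    rw [hα]
    have : (q:ℂ) ≠ 0 := by exact_mod_cast hq0.ne'
    push_cast
    field_simp
  · have hrn : ‖(r:ℂ)‖ = r := by rw [Complex.norm_real, Real.norm_of_nonneg hr0.le]
    have hexp : Complex.exp (2 * Real.pi * Complex.I / q) = Complex.exp ((α:ℂ) * I) := by
      congr 1
      rw [hα]
      push_cast
      ring
    rw [hexp]
    have hw'n : ‖(r:ℂ) * Complex.exp ((α:ℂ) * I)‖ = r := by
      rw [norm_mul, Complex.norm_exp_ofReal_mul_I, hrn, mul_one]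
    have m1 := mob_one_sub (a := w) (z := z) (by rw [hwn]; exact hr1) (by rw [hz]; exact hr1)
    have m2 := mob_one_sub (a := (r:ℂ)) (z := r * Complex.exp ((α:ℂ) * I)) (by rw [hrn]; exact hr1)
      (by rw [hw'n]; exact hr1)
    rw [den_circ _ hrn, hrn, hw'n] at m2
    have hdz : ‖1 - (starRingEnd ℂ) w * z‖ ^ 2 = 1 - 2 * r ^ 2 * Real.cos θ + r ^ 4 := by
      rw [hzw]
      exact den_circ w hwn
    rw [hdz, hwn, hz] at m1
    have hr2 : r ^ 2 < 1 := by nlinarith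
    have p1 : 0 < 1 - 2 * r ^ 2 * Real.cos θ + r ^ 4 := by
      have := mul_le_mul_of_nonneg_left (Real.cos_le_one θ) (by positivity : 0 ≤ 2 * r ^ 2)
      nlinarith [sq_pos_of_pos (by linarith : 0 < 1 - r ^ 2)]
    have hle : 1 - 2 * r ^ 2 * Real.cos θ + r ^ 4 ≤ 1 - 2 * r ^ 2 * Real.cos α + r ^ 4 := by
      have := mul_le_mul_of_nonneg_left hcos (by positivity : 0 ≤ 2 * r ^ 2)
      linarith
    have hdiv := div_le_div_of_nonneg_left (mul_pos (by linarith : 0 < 1 - r ^ 2) (by linarith : 0 < 1 - r ^ 2)).le p1 hle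
    rw [← m1, ← m2] at hdiv
    exact abs_le_of_sq_le_sq' (by linarith) (norm_nonneg _) |>.2

lemma cover_miss {φ : ℂ → ℂ} {U : Set ℂ} (hU : IsOpen U) (hφ : IsHoloCover φ U) {w : ℂ}
    (hw : w ∈ U) (hn : ∀ t ∈ ball (0:ℂ) 1, φ t ≠ w) :
    ∀ᶠ v in 𝓝 w, ∀ t ∈ ball (0:ℂ) 1, φ t ≠ v := by
  obtain ⟨_, h, ht⟩ := hφ
  obtain ⟨_, T, hx⟩ := ht ⟨w, hw⟩
  have hop : IsOpen (Subtype.val '' T.baseSet) := hU.isOpenMap_subtype_val _ T.open_baseSet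
  filter_upwards [hop.mem_nhds ⟨⟨w, hw⟩, hx, rfl⟩] with v hv t htb hv'
  obtain ⟨y, hy, hyv⟩ := hv
  have hs : (⟨t, htb⟩ : ball (0:ℂ) 1) ∈ T.source := by
    rw [T.mem_source]
    have : MapsTo.restrict φ (ball 0 1) U h ⟨t, htb⟩ = y := by
      apply Subtype.ext
      rw [hyv, ← hv']
      rfl
    rw [this]
    exact hy
  obtain ⟨⟨s, hs1⟩, hs2⟩ := (T ⟨t, htb⟩).2
  exact hn s hs1 (congrArg Subtype.val hs2)

open Classical in
def Gq (f φ : ℂ → ℂ) (R : ℝ) (z : ℂ) : ℝ :=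
  if h : ∃ t ∈ ball (0:ℂ) 1, φ t = f z then Fq f φ R z h.choose else 0

lemma Gq_eq {f φ : ℂ → ℂ} {U : Set ℂ} (hU : IsOpen U) (hφ : IsHoloCover φ U) {R : ℝ} {z t : ℂ}
    (ht : t ∈ ball (0:ℂ) 1) (h : φ t = f z) : Gq f φ R z = Fq f φ R z t := by
  have hex : ∃ t ∈ ball (0:ℂ) 1, φ t = f z := ⟨t, ht, h⟩
  rw [Gq, dif_pos hex, Fq, Fq,
    cover_fiber hU hφ hex.choose_spec.1 ht (hex.choose_spec.2.trans h.symm)]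

lemma Gq_none {f φ : ℂ → ℂ} {R : ℝ} {z : ℂ}
    (h : ∀ t ∈ ball (0:ℂ) 1, φ t ≠ f z) : Gq f φ R z = 0 := by
  rw [Gq, dif_neg]
  rintro ⟨t, ht, h'⟩
  exact h t ht h'

lemma Gq_usc {f φ : ℂ → ℂ} {E : Set ℂ} (hU : IsOpen (ball (0:ℂ) 1 \ E))
    (hφ : IsHoloCover φ (ball 0 1 \ E)) (hf : DifferentiableOn ℂ f (ball 0 1))
    (hm : MapsTo f (ball 0 1) (ball 0 1)) {R : ℝ} (hR0 : 0 < R) (hR1 : R < 1) {z₀ : ℂ}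
    (hz₀ : ‖z₀‖ < R) {y : ℝ} (hy : Gq f φ R z₀ < y) : ∀ᶠ z in 𝓝 z₀, Gq f φ R z < y := by
  have hz₀1 : ‖z₀‖ < 1 := hz₀.trans hR1
  have hz₀b : z₀ ∈ ball (0:ℂ) 1 := by simpa using hz₀1
  have hw₀ : ‖f z₀‖ < 1 := by simpa using hm hz₀b
  have hfc : ContinuousAt f z₀ := (hf.differentiableAt (isOpen_ball.mem_nhds hz₀b)).continuousAt
  have hRz : R ^ 2 - ‖z₀‖ ^ 2 ≠ 0 := by
    have := norm_nonneg z₀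
    nlinarith
  have hA : ContinuousAt (fun z : ℂ => R * (1 - ‖z‖ ^ 2) / (R ^ 2 - ‖z‖ ^ 2)) z₀ :=
    ContinuousAt.div (by fun_prop) (by fun_prop) hRz
  by_cases hex : ∃ t ∈ ball (0:ℂ) 1, φ t = f z₀
  · obtain ⟨t₀, ht₀, h0⟩ := hex
    obtain ⟨g, hg0, hg⟩ := cover_local' hU hφ ht₀
    rw [h0] at hg0 hg
    rw [Gq_eq hU hφ ht₀ h0] at hy
    have hgc : ContinuousAt (fun z => g (f z)) z₀ :=
      ContinuousAt.comp (g := g) hg.self_of_nhds.1.continuousAt hfc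
    have hdc : ContinuousAt (fun z => deriv φ (g (f z))) z₀ := by
      refine ContinuousAt.comp (g := deriv φ) ?_ hgc
      rw [hg0]
      exact ((hφ.1.deriv isOpen_ball).differentiableAt (isOpen_ball.mem_nhds ht₀)).continuousAt
    have hc : ContinuousAt (fun z => Fq f φ R z (g (f z))) z₀ := by
      unfold Fq
      refine hA.mul (ContinuousAt.div (hdc.norm.mul (continuousAt_const.sub (hgc.norm.pow 2)))
        (continuousAt_const.sub (hfc.norm.pow 2)) (sq_pos' hw₀).ne')
    have hlt : ∀ᶠ z in 𝓝 z₀, Fq f φ R z (g (f z)) < y :=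
      hc.eventually_lt_const (by simpa only [hg0] using hy)
    filter_upwards [hlt, hfc.eventually hg] with z a b
    rw [Gq_eq hU hφ b.2.1 b.2.2]
    exact a
  · push Not at hex
    rw [Gq_none hex] at hy
    by_cases hE : f z₀ ∈ E
    · have hmc : ContinuousAt (fun z => R * (1 - ‖z‖ ^ 2) / (R ^ 2 - ‖z‖ ^ 2) *
          dl ‖mob (f z₀) (f z)‖) z₀ := by
        refine hA.mul (ContinuousAt.comp (g := dl) ?_ ?_)
        · exact dl_contAt (norm_nonneg _) (mob_lt hw₀ hw₀)
        · exact (ContinuousAt.comp (g := mob (f z₀)) (mob_diffAt hw₀ hw₀).continuousAt hfc).norm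
      have hlt := hmc.eventually_lt_const (u := y) (by
        simpa [mob_self, dl] using hy)
      have hb : ball (0:ℂ) R ∈ 𝓝 z₀ := isOpen_ball.mem_nhds (by simpa using hz₀)
      filter_upwards [hlt, hb] with z a hzb
      have hzR : ‖z‖ < R := by simpa using hzb
      by_cases hex' : ∃ t ∈ ball (0:ℂ) 1, φ t = f z
      · obtain ⟨t, ht, h⟩ := hex'
        rw [Gq_eq hU hφ ht h, Fq]
        refine lt_of_le_of_lt ?_ a
        have hov := omit_val (a := f z₀) hφ.1 (fun t ht => (hφ.2.1 ht).1) hw₀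
          (fun t ht h => (hφ.2.1 ht).2 (by rw [h]; exact hE)) (t := t) (by simpa using ht)
        rw [h] at hov
        have p1 := sq_pos' (hzR.trans hR1)
        have p2 : 0 < R ^ 2 - ‖z‖ ^ 2 := by
          have := norm_nonneg z
          nlinarith
        exact mul_le_mul_of_nonneg_left hov (by positivity)
      · push Not at hex'
        rw [Gq_none hex']
        exact hy
    · have := hfc.eventually (cover_miss hU hφ ⟨hm hz₀b, hE⟩ hex)
      filter_upwards [this] with z hz
      rw [Gq_none hz]
      exact hy

lemma main_bound {f φ : ℂ → ℂ} {E : Set ℂ} (hU : IsOpen (ball (0:ℂ) 1 \ E))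
    (hφ : IsHoloCover φ (ball 0 1 \ E)) (hf : DifferentiableOn ℂ f (ball 0 1))
    (hm : MapsTo f (ball 0 1) (ball 0 1)) (hf0 : f 0 = 0) (hφ0 : φ 0 = 0) {r R δ : ℝ} (hr0 : 0 < r)
    (hrR : r < R) (hR1 : R < 1)
    (hδ : ∀ z : ℂ, ‖z‖ = r → ∀ t ∈ ball (0:ℂ) 1, φ t = f z →
      ‖deriv φ t‖ * (1 - ‖t‖ ^ 2) / (1 - ‖f z‖ ^ 2) ≤ δ)
    (hc : R * (1 - r ^ 2) * δ ≤ R ^ 2 - r ^ 2) : ‖deriv φ 0‖ ≤ R := by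
  have hR0 : 0 < R := hr0.trans hrR
  have z0 : (0:ℂ) ∈ ball (0:ℂ) 1 := by simp
  have hz0 : (0:ℂ) ∈ closedBall (0:ℂ) r := by simpa using hr0.le
  by_contra hcon
  push Not at hcon
  have hG0 : 1 < Gq f φ R 0 := by
    rw [Gq_eq hU hφ z0 (hφ0.trans hf0.symm), Fq, hf0]
    have e : R * (1 - ‖(0:ℂ)‖ ^ 2) / (R ^ 2 - ‖(0:ℂ)‖ ^ 2) *
        (‖deriv φ 0‖ * (1 - ‖(0:ℂ)‖ ^ 2) / (1 - ‖(0:ℂ)‖ ^ 2)) = ‖deriv φ 0‖ / R := by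
      simp
      field_simp
    rw [e, one_lt_div hR0]
    exact hcon
  have husc : UpperSemicontinuousOn (Gq f φ R) (closedBall 0 r) := by
    intro z hz y hy
    have hz' : ‖z‖ ≤ r := by simpa using hz
    exact (Gq_usc hU hφ hf hm hR0 hR1 (hz'.trans_lt hrR) hy).filter_mono nhdsWithin_le_nhds
  obtain ⟨zm, hzm, hmax⟩ := husc.exists_isMaxOn ⟨0, hz0⟩ (isCompact_closedBall 0 r)
  have hGm : 1 < Gq f φ R zm := lt_of_lt_of_le hG0 (hmax hz0)
  have hzm' : ‖zm‖ ≤ r := by simpa using hzm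
  by_cases hex : ∃ t ∈ ball (0:ℂ) 1, φ t = f zm
  · obtain ⟨t, ht, h⟩ := hex
    rw [Gq_eq hU hφ ht h] at hGm
    rcases hzm'.eq_or_lt with heq | hlt
    · have hd := hδ zm heq t ht h
      rw [Fq, heq] at hGm
      have p2 : 0 < R ^ 2 - r ^ 2 := by nlinarith
      have p1 : 0 < 1 - r ^ 2 := by nlinarith
      have := mul_le_mul_of_nonneg_left hd (by positivity : 0 ≤ R * (1 - r ^ 2) / (R ^ 2 - r ^ 2))
      have h2 : R * (1 - r ^ 2) / (R ^ 2 - r ^ 2) * δ ≤ 1 := by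
        rw [div_mul_eq_mul_div, div_le_one p2]
        exact hc
      linarith
    · refine no_max hU hφ sdiff_subset hf hm hR0 hR1 (hlt.trans hrR) (by simpa using ht) h hGm ?_
      have hb : ball (0:ℂ) r ∈ 𝓝 zm := isOpen_ball.mem_nhds (by simpa using hlt)
      filter_upwards [hb] with z hz s hs hsz
      rw [← Gq_eq hU hφ hs hsz, ← Gq_eq hU hφ ht h]
      exact hmax (ball_subset_closedBall hz)
  · push Not at hex
    rw [Gq_none hex] at hGm
    linarith

lemma rootsSet_finite (r : ℝ) {q : ℕ} (hq : 2 ≤ q) : (rootsSet r q).Finite := by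
  have h : {ζ : ℂ | ζ ^ q = 1}.Finite := by
    have := Polynomial.nthRootsFinset q (1:ℂ) |>.finite_toSet
    refine this.subset fun ζ hζ => ?_
    simp only [Finset.mem_coe]
    rw [Polynomial.mem_nthRootsFinset (by omega)]
    exact hζ
  refine (h.image fun ζ => (r:ℂ) * ζ).subset ?_
  rintro w ⟨ζ, hζ, rfl⟩
  exact ⟨ζ, hζ, rfl⟩

/-- For every `d > 0` there is `K(d) > 1` such that: for every nonconstant
holomorphic `f : 𝔻 → 𝔻` with `f 0 = 0`, every `r ∈ (e⁻¹, 1)` and integer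
`q ≥ 2` with the hyperbolic distance between `r` and `r·e^{2πi/q}` at most `d`,
and `0 ∉ f(r·𝕌_q)`, every holomorphic covering map `φ : 𝔻 → 𝔻 \ f(r·𝕌_q)`
with `φ 0 = 0` satisfies `ln|φ'(0)| ≤ ln r / K(d) < 0`. -/
theorem stmt13 : ∀ d > (0 : ℝ), ∃ K > (1 : ℝ),
    ∀ f : ℂ → ℂ, DifferentiableOn ℂ f (Metric.ball 0 1) →
      Set.MapsTo f (Metric.ball 0 1) (Metric.ball 0 1) → f 0 = 0 →
      (∃ z ∈ Metric.ball (0 : ℂ) 1, f z ≠ f 0) →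
      ∀ r : ℝ, Real.exp (-1) < r → r < 1 →
      ∀ q : ℕ, 2 ≤ q →
      hypDist (r : ℂ) ((r : ℂ) * Complex.exp (2 * Real.pi * Complex.I / q)) ≤ d →
      (0 : ℂ) ∉ f '' rootsSet r q →
      ∀ φ : ℂ → ℂ, IsHoloCover φ (Metric.ball 0 1 \ f '' rootsSet r q) →
        φ 0 = 0 →
        Real.log ‖deriv φ 0‖ ≤ Real.log r / K ∧
        Real.log r / K < 0 := by
  intro d hd
  have hed : 1 < Real.exp d := Real.one_lt_exp_iff.mpr hd
  obtain ⟨δ, hδ0, hδ1, hδ⟩ := dl_bound (s₀ := (Real.exp d - 1) / (Real.exp d + 1))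
    (div_nonneg (by linarith) (by linarith)) (by rw [div_lt_one (by linarith)]; linarith)
  refine ⟨2 / (1 - δ), by rw [gt_iff_lt, one_lt_div (by linarith)]; linarith, ?_⟩
  intro f hf hm hf0 _ r hr hr1 q hq hdist _ φ hφ hφ0
  have hr0 : 0 < r := (Real.exp_pos _).trans hr
  have hK : Real.log r / (2 / (1 - δ)) = Real.log r * ((1 - δ) / 2) := by
    rw [div_div_eq_mul_div, mul_div_assoc]
  have hneg : Real.log r * ((1 - δ) / 2) < 0 :=
    mul_neg_of_neg_of_pos (Real.log_neg hr0 hr1) (by linarith)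
  rw [hK]
  refine ⟨?_, hneg⟩
  obtain ⟨hrR, hc⟩ := const_ineq hδ0 hδ1 hr hr1
  have hU : IsOpen (ball (0:ℂ) 1 \ f '' rootsSet r q) :=
    isOpen_ball.sdiff ((rootsSet_finite r hq).image f).isClosed
  have hrn : ‖(r:ℂ)‖ = r := by rw [Complex.norm_real, Real.norm_of_nonneg hr0.le]
  have hbound : ‖deriv φ 0‖ ≤ Real.exp (Real.log r * ((1 - δ) / 2)) := by
    refine main_bound hU hφ hf hm hf0 hφ0 hr0 hrR (Real.exp_lt_one_iff.mpr hneg) ?_ hc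
    intro z hz t ht h
    obtain ⟨w, hw, hwn, hwz⟩ := geom hr0 hr1 hq hz
    have hwn' : ‖w‖ < 1 := by rw [hwn]; exact hr1
    have hz' : ‖z‖ < 1 := by rw [hz]; exact hr1
    have hfw : ‖f w‖ < 1 := by simpa using hm (show w ∈ ball (0:ℂ) 1 by simpa using hwn')
    have hrot : ‖(r : ℂ) * Complex.exp (2 * Real.pi * Complex.I / q)‖ < 1 := by
      have e : (2 * Real.pi * Complex.I / q : ℂ) = ((2 * Real.pi / q : ℝ) : ℂ) * Complex.I := by
        push_cast
        ring
      rw [norm_mul, e, Complex.norm_exp_ofReal_mul_I, hrn, mul_one]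
      exact hr1
    have hh := hyp_le (by rw [hrn]; exact hr1) hrot hdist
    have hsp := schwarz_pick_dist hf hm hwn' hz'
    have hov := omit_val (a := f w) hφ.1 (fun t ht => (hφ.2.1 ht).1) hfw
      (fun t ht h => (hφ.2.1 ht).2 (by rw [h]; exact ⟨w, hw, rfl⟩)) (t := t) (by simpa using ht)
    rw [h] at hov
    exact hov.trans (hδ _ (norm_nonneg _) (hsp.trans (hwz.trans hh)))
  have hpos : 0 < ‖deriv φ 0‖ := by
    have := cover_deriv hU hφ (t₀ := 0) (by simp)
    simpa using this
  rw [Real.log_le_iff_le_exp hpos]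
  exact hbound
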